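/- Fix a real number c with 0 ≤ c < 1. The cubic polynomial g₁(ξ) = 2187ξ³ + 3807cξ² + (1953c² − 3840)ξ + 245c³ − 4352c has exactly one positive real zero, and this zero lies in the open interval I = (ξ_min, ξ_max), where ξ_min = (−5c + 8√2·√(9−c²))/27 and ξ_max = (4−c)/3. Moreover c < 1 < ξ_min < ξ_max. -/

import Mathlib

noncomputable def g1 (c ξ : ℝ) : ℝ :=
  2187*ξ^3 + 3807*c*ξ^2 + (1953*c^2 - 3840)*ξ + 245*c^3 - 4352*c

noncomputable def ximin (c : ℝ) : ℝ := (-5*c + 8*Real.sqrt 2*Real.sqrt (9 - c^2))/27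

noncomputable def ximax (c : ℝ) : ℝ := (4 - c)/3

theorem g1_mono_aux (c a b : ℝ) (hc0 : 0 ≤ c) (hc1 : c < 1) (ha : 0 < a) (hab : a < b)
    (h : 0 ≤ g1 c a) : 0 < g1 c b := by
  have hb : 0 < b := ha.trans hab
  have key : g1 c b * a - g1 c a * b
      = (b - a) * (2187*(a*b*(a+b)) + 3807*(c*(a*b)) + c*(4352 - 245*c^2)) := by
    unfold g1; ring
  have h1 : 0 < 2187*(a*b*(a+b)) := by positivity
  have h2 : 0 ≤ 3807*(c*(a*b)) := by positivity
  have h3 : 0 ≤ c*(4352 - 245*c^2) := mul_nonneg hc0 (by nlinarith)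
  have h4 : 0 < (b - a) * (2187*(a*b*(a+b)) + 3807*(c*(a*b)) + c*(4352 - 245*c^2)) :=
    mul_pos (by linarith) (by linarith)
  have h5 : 0 ≤ g1 c a * b := mul_nonneg h hb.le
  have h6 : 0 < g1 c b * a := by linarith
  exact pos_of_mul_pos_left h6 ha.le

/-- `g₁` has exactly one positive zero, it lies in `I = (ξ_min, ξ_max)`,
and `c < 1 < ξ_min < ξ_max`. -/
theorem stmt_11 (c : ℝ) (hc0 : 0 ≤ c) (hc1 : c < 1) :
    (∃! ξ : ℝ, 0 < ξ ∧ g1 c ξ = 0) ∧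
    (∀ ξ : ℝ, 0 < ξ → g1 c ξ = 0 → ξ ∈ Set.Ioo (ximin c) (ximax c)) ∧
    c < 1 ∧ 1 < ximin c ∧ ximin c < ximax c := by
  have h2 : Real.sqrt 2 ^ 2 = 2 := Real.sq_sqrt (by norm_num)
  have h9 : Real.sqrt (9 - c^2) ^ 2 = 9 - c^2 := Real.sq_sqrt (by nlinarith)
  obtain ⟨y, hy⟩ : ∃ y, y = 8 * Real.sqrt 2 * Real.sqrt (9 - c^2) := ⟨_, rfl⟩
  have hy0 : 0 ≤ y := by rw [hy]; positivity
  have hy2 : y^2 = 128 * (9 - c^2) := by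
    rw [hy, mul_pow, mul_pow, h2, h9]; ring
  have hmin : ximin c = (-5*c + y)/27 := by rw [hy]; rfl
  have hyl : 27 + 5*c < y := by
    apply lt_of_pow_lt_pow_left₀ 2 hy0
    nlinarith [mul_pos (sub_pos.2 hc1) (by linarith : 0 < 47 + 17*c)]
  have hyu : y < 36 - 4*c := by
    apply lt_of_pow_lt_pow_left₀ 2 (by linarith)
    nlinarith [mul_pos (sub_pos.2 hc1) (sub_pos.2 hc1)]
  have hm1 : 1 < ximin c := by rw [hmin]; linarith
  have hmm : ximin c < ximax c := by rw [hmin]; unfold ximax; linarith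
  have hgmax : 0 < g1 c (ximax c) := by
    have e : g1 c (ximax c) = 64*(1-c)^3 := by unfold g1 ximax; ring
    have : 0 < 1 - c := by linarith
    rw [e]; positivity
  have hgmin : g1 c (ximin c) < 0 := by
    have e : 9 * g1 c (ximin c) = -(128*((1-c)*(1+c)*(y-32*c))) := by
      rw [hmin]; unfold g1
      linear_combination (y + 32*c) * hy2
    have : 0 < (1-c)*(1+c)*(y-32*c) :=
      mul_pos (mul_pos (by linarith) (by linarith)) (by linarith)
    linarith
  have hin : ∀ ξ : ℝ, 0 < ξ → g1 c ξ = 0 → ξ ∈ Set.Ioo (ximin c) (ximax c) := by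
    intro ξ h0 hz
    constructor
    · by_contra hle
      rcases (not_lt.1 hle).lt_or_eq with h | h
      · have := g1_mono_aux c ξ _ hc0 hc1 h0 h hz.ge
        linarith
      · rw [h] at hz; linarith
    · by_contra hle
      rcases (not_lt.1 hle).lt_or_eq with h | h
      · have := g1_mono_aux c _ ξ hc0 hc1 (by linarith) h hgmax.le
        linarith
      · rw [← h] at hz; linarith
  refine ⟨?_, hin, hc1, hm1, hmm⟩
  have hcont : Continuous (g1 c) := by unfold g1; fun_prop
  obtain ⟨ξ, hξ, hz⟩ := intermediate_value_Icc hmm.le hcont.continuousOn ⟨hgmin.le, hgmax.le⟩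
  have hξ0 : 0 < ξ := by linarith [hξ.1]
  refine ⟨ξ, ⟨hξ0, hz⟩, ?_⟩
  rintro z ⟨hz0, hzz⟩
  rcases lt_trichotomy z ξ with h | h | h
  · have := g1_mono_aux c _ _ hc0 hc1 hz0 h hzz.ge
    linarith
  · exact h
  · have := g1_mono_aux c _ _ hc0 hc1 hξ0 h hz.ge
    linarith
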